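/- There is a uniform constant C such that for every h ∈ C₀^∞(ℝ₊×ℝ³) and every t ≥ 0: ‖⟨t−r⟩ ∇_x² h(t,·)‖₂ ≤ C Σ_{|α|≤1} ‖Γ^α h'(t,·)‖₂ + C‖⟨t+r⟩ □h(t,·)‖₂, where ∇_x² h denotes the collection of all second spatial derivatives ∂_i∂_j h, 1 ≤ i,j ≤ 3. -/

import Mathlib

open MeasureTheory Real Finset

noncomputable section

/-- Points of space-time `ℝ×ℝ³`, written `X = (x₀,x₁,x₂,x₃)` with `x₀ = t`. -/
abbrev Pt : Type := Fin 4 → ℝ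
/-- Points of space `ℝ³`. -/
abbrev Sp : Type := Fin 3 → ℝ

/-- Space-time partial derivative `∂_a`. -/
def pd (a : Fin 4) (u : Pt → ℝ) : Pt → ℝ := fun X => fderiv ℝ u X (Pi.single a 1)

/-- Rotation field `Ω_{ij} = x_i ∂_j - x_j ∂_i` (space-time indices). -/
def rot (i j : Fin 4) (u : Pt → ℝ) : Pt → ℝ := fun X => X i * pd j u X - X j * pd i u X

/-- Scaling field `S = t ∂_t + x·∇_x = x^a ∂_a`. -/
def scal (u : Pt → ℝ) : Pt → ℝ := fun X => ∑ a, X a * pd a u X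

/-- The eight vector fields `Γ = (∂, Ω, S)`. -/
def Gam : Fin 8 → (Pt → ℝ) → Pt → ℝ :=
  ![pd 0, pd 1, pd 2, pd 3, rot 1 2, rot 1 3, rot 2 3, scal]

/-- `Γ^α` for a multi-index `α` (a word in the eight fields) of length `m`. -/
def GamComp : ∀ {m : ℕ}, (Fin m → Fin 8) → (Pt → ℝ) → Pt → ℝ
  | 0, _, u => u
  | _ + 1, α, u => Gam (α 0) (GamComp (fun i => α i.succ) u)

/-- Euclidean length `r = |x|` of a spatial point. -/
def rad (x : Sp) : ℝ := Real.sqrt (∑ i, (x i) ^ 2)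

/-- Japanese bracket `⟨z⟩ = (1+z²)^{1/2}`. -/
def jb (z : ℝ) : ℝ := Real.sqrt (1 + z ^ 2)

/-- Euclidean norm `|∂u|` of the space-time gradient. -/
def gradNorm (u : Pt → ℝ) (X : Pt) : ℝ := Real.sqrt (∑ a, (pd a u X) ^ 2)

/-- The unit-speed d'Alembertian `□ = ∂_t² - Δ_x`. -/
def box1 (u : Pt → ℝ) : Pt → ℝ := fun X =>
  pd 0 (pd 0 u) X - ∑ j : Fin 3, pd j.succ (pd j.succ u) X

/-- The d'Alembertian `∂_t² - c²Δ_x` with speed `c`. -/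
def boxc (c : ℝ) (u : Pt → ℝ) : Pt → ℝ := fun X =>
  pd 0 (pd 0 u) X - c ^ 2 * ∑ j : Fin 3, pd j.succ (pd j.succ u) X

/-- The smooth weight. -/
def Wt (t : ℝ) (X : Pt) : ℝ := 1 + (t - Real.sqrt (1 + ∑ j : Fin 3, (X j.succ) ^ 2)) ^ 2

lemma Wt_pos_arg (X : Pt) : 0 < 1 + ∑ j : Fin 3, (X j.succ) ^ 2 := by positivity

lemma Wt_contDiff (t : ℝ) : ContDiff ℝ (⊤ : ℕ∞) (Wt t) := by
  unfold Wt
  refine contDiff_const.add ((contDiff_const.sub (ContDiff.sqrt ?_ ?_)).pow 2)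
  · fun_prop
  · intro X; exact (Wt_pos_arg X).ne'

lemma pd_contDiff {h : Pt → ℝ} (hh : ContDiff ℝ (⊤ : ℕ∞) h) (a : Fin 4) :
    ContDiff ℝ (⊤ : ℕ∞) (pd a h) := by
  unfold pd
  exact (hh.fderiv_right (m := (⊤ : ℕ∞)) (by simp)).clm_apply contDiff_const

lemma pd_supp {h : Pt → ℝ} (hh : HasCompactSupport h) (a : Fin 4) :
    HasCompactSupport (pd a h) := hh.fderiv_apply ℝ (Pi.single a 1)

lemma pd_comm {h : Pt → ℝ} (hh : ContDiff ℝ (⊤ : ℕ∞) h) (a b : Fin 4) :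
    pd a (pd b h) = pd b (pd a h) := by
  funext X
  have hd : DifferentiableAt ℝ (fderiv ℝ h) X :=
    ((hh.fderiv_right (m := (⊤ : ℕ∞)) (by simp)).differentiable (by simp)) X
  have key : ∀ c d : Fin 4, pd c (pd d h) X
      = fderiv ℝ (fderiv ℝ h) X (Pi.single c 1) (Pi.single d 1) := by
    intro c d
    unfold pd
    rw [fderiv_clm_apply hd (differentiableAt_const _)]
    simp
  rw [key, key]
  have hs : IsSymmSndFDerivAt ℝ h X := (hh.contDiffAt).isSymmSndFDerivAt (by
    simp only [minSmoothness_of_isRCLikeNormedField]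
    exact WithTop.coe_le_coe.2 (le_top : (2 : ℕ∞) ≤ ⊤))
  exact hs _ _

lemma pd_mul {u v : Pt → ℝ} (hu : ContDiff ℝ (⊤ : ℕ∞) u) (hv : ContDiff ℝ (⊤ : ℕ∞) v)
    (a : Fin 4) (X : Pt) :
    pd a (fun Y => u Y * v Y) X = pd a u X * v X + u X * pd a v X := by
  unfold pd
  rw [fderiv_fun_mul (hu.differentiable (by simp) X) (hv.differentiable (by simp) X)]
  simp
  ring

lemma pd_Wt (t : ℝ) (i : Fin 3) (X : Pt) : (pd i.succ (Wt t) X) ^ 2 ≤ 4 * Wt t X := by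
  set N : ℝ := 1 + ∑ j : Fin 3, (X j.succ) ^ 2 with hN
  have hNp : 0 < N := Wt_pos_arg X
  have hc : ∀ j : Fin 3, HasFDerivAt (fun Y : Pt => Y j.succ)
      (ContinuousLinearMap.proj (R := ℝ) (φ := fun _ : Fin 4 => ℝ) j.succ) X := fun j =>
    hasFDerivAt_apply j.succ X
  have h1 : HasFDerivAt (fun Y : Pt => 1 + ∑ j : Fin 3, (Y j.succ) ^ 2) _ X :=
    (HasFDerivAt.fun_sum (u := Finset.univ) fun j _ => (hc j).pow 2).const_add 1
  have h2 := ((h1.sqrt hNp.ne').const_sub t).pow 2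
  have h3 := h2.const_add 1
  have h4 : fderiv ℝ (Wt t) X = _ := h3.fderiv
  have h5 : pd i.succ (Wt t) X = -(2 * (t - √N)) * (X i.succ / √N) := by
    unfold pd
    rw [h4]
    simp [Pi.single_apply, ← hN]
    left
    ring
  have hs : 0 < √N := Real.sqrt_pos.2 hNp
  have hx : (X i.succ / √N) ^ 2 ≤ 1 := by
    rw [div_pow, Real.sq_sqrt hNp.le, div_le_one hNp, hN]
    have := Finset.single_le_sum (f := fun j : Fin 3 => (X j.succ) ^ 2)
      (fun j _ => sq_nonneg _) (Finset.mem_univ i)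
    linarith
  have hW : Wt t X = 1 + (t - √N) ^ 2 := rfl
  rw [h5, hW, mul_pow]
  nlinarith [sq_nonneg (t - √N), sq_nonneg (X i.succ / √N)]

lemma cons_emb (t : ℝ) :
    Topology.IsClosedEmbedding (fun x : Sp => (Fin.cons t x : Pt)) := by
  refine Topology.IsClosedEmbedding.of_continuous_injective_isClosedMap ?_ ?_ ?_
  · fun_prop
  · intro x y hxy
    exact (Fin.cons_injective2 hxy).2
  · have hc : Continuous (fun x : Sp => (Fin.cons t x : Pt)) := by fun_prop
    have hl : Function.LeftInverse (fun X : Pt => (fun j : Fin 3 => X j.succ))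
      (fun x : Sp => (Fin.cons t x : Pt)) := by intro x; funext j; simp
    exact (hl.isClosedEmbedding (by fun_prop) hc).isClosedMap

lemma slice_integrable {P : Pt → ℝ} (hP : Continuous P) (hs : HasCompactSupport P) (t : ℝ) :
    Integrable (fun x : Sp => P (Fin.cons t x)) :=
  (hP.comp (cons_emb t).continuous).integrable_of_hasCompactSupport
    (hs.comp_isClosedEmbedding (cons_emb t))

lemma int_pd_zero {P : Pt → ℝ} (hP : ContDiff ℝ (⊤ : ℕ∞) P) (hs : HasCompactSupport P) (t : ℝ)
    (i : Fin 3) : ∫ x : Sp, pd i.succ P (Fin.cons t x) = 0 := by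
  have hd : ∀ x : Sp, HasFDerivAt (fun x : Sp => P (Fin.cons t x))
      ((fderiv ℝ P (Fin.cons t x)).comp
        (ContinuousLinearMap.pi (Fin.cons 0 (fun j => ContinuousLinearMap.proj j)))) x := by
    intro x
    refine HasFDerivAt.comp x (hP.differentiable (by simp) _).hasFDerivAt ?_
    rw [hasFDerivAt_pi]
    intro a
    refine Fin.cases ?_ (fun j => ?_) a
    · simpa using hasFDerivAt_const t x
    · simpa using hasFDerivAt_apply j x
  have he : ∀ x : Sp, pd i.succ P (Fin.cons t x)
      = fderiv ℝ (fun x : Sp => P (Fin.cons t x)) x (Pi.single i 1) := by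
    intro x
    rw [(hd x).fderiv]
    unfold pd
    simp only [ContinuousLinearMap.comp_apply]
    congr 1
    funext a
    refine Fin.cases ?_ (fun j => ?_) a
    · simp
    · simp [Pi.single_apply]
  have hi1 := slice_integrable (pd_contDiff hP i.succ).continuous (pd_supp hs i.succ) t
  have hi2 := slice_integrable hP.continuous hs t
  simp_rw [he] at hi1 ⊢
  have := integral_mul_fderiv_eq_neg_fderiv_mul_of_integrable (μ := (volume : Measure Sp))
    (f := fun _ : Sp => (1 : ℝ)) (g := fun x : Sp => P (Fin.cons t x)) (v := Pi.single i 1)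
    (by simp) (by simpa using hi1) (by simpa using hi2) (by fun_prop)
    (fun x _ => (hd x).differentiableAt)
  simpa using this

lemma alg_ibp (W : ℝ) (hW : 0 ≤ W) (w q : Fin 3 → ℝ) (H : Fin 3 → Fin 3 → ℝ)
    (hw : ∀ i, (w i) ^ 2 ≤ 4 * W) :
    W * ∑ i, ∑ j, (H i j) ^ 2 ≤ 2 * (W * (∑ i, H i i) ^ 2)
      + 2 * (∑ i, ∑ j, ((w i * q j * H i j + W * (H i j) ^ 2)
          - (w j * q j * H i i + W * (H j j * H i i)))) + 96 * ∑ j, (q j) ^ 2 := by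
  have key : ∀ (i : Fin 3) (a b s : ℝ), s ^ 2 = 1 →
      s * (w i * a * b) ≤ W * b ^ 2 / 8 + 8 * a ^ 2 := by
    intro i a b s hs
    have h1 : (w i) ^ 2 * b ^ 2 ≤ 4 * W * b ^ 2 := mul_le_mul_of_nonneg_right (hw i) (sq_nonneg b)
    have h2 : s ^ 2 * (w i ^ 2 * b ^ 2) = w i ^ 2 * b ^ 2 := by rw [hs, one_mul]
    nlinarith [sq_nonneg (s * w i * b - 16 * a)]
  have k1 := fun i j => key i (q j) (H i j) (-1) (by norm_num)
  have k2 := fun i j => key j (q j) (H i i) 1 (by norm_num)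
  have S : ∀ i j, 0 ≤ W * (H i j) ^ 2 := fun i j => mul_nonneg hW (sq_nonneg _)
  simp only [Fin.sum_univ_three]
  linarith [k1 0 0, k1 0 1, k1 0 2, k1 1 0, k1 1 1, k1 1 2, k1 2 0, k1 2 1, k1 2 2,
    k2 0 0, k2 0 1, k2 0 2, k2 1 0, k2 1 1, k2 1 2, k2 2 0, k2 2 1, k2 2 2,
    S 0 0, S 0 1, S 0 2, S 1 0, S 1 1, S 1 2, S 2 0, S 2 1, S 2 2]

lemma sq3 (a b c : ℝ) : (a + b + c) ^ 2 ≤ 3 * (a ^ 2 + b ^ 2 + c ^ 2) := by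
  nlinarith [sq_nonneg (a - b), sq_nonneg (b - c), sq_nonneg (a - c)]

lemma cs4 (t x y z u a b c : ℝ) : (t * u + x * a + y * b + z * c) ^ 2
    ≤ (t ^ 2 + (x ^ 2 + y ^ 2 + z ^ 2)) * (u ^ 2 + a ^ 2 + b ^ 2 + c ^ 2) := by
  nlinarith [sq_nonneg (t * a - x * u), sq_nonneg (t * b - y * u), sq_nonneg (t * c - z * u),
    sq_nonneg (x * b - y * a), sq_nonneg (x * c - z * a), sq_nonneg (y * c - z * b)]

/-- The Klainerman–Sideris pointwise estimate for the Laplacian. -/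
lemma alg_KS (t r x y z h00 h01 h02 h03 h11 h12 h13 h22 h23 h33 Q : ℝ) (ht : 0 ≤ t) (hr : 0 ≤ r)
    (hrr : r ^ 2 = x ^ 2 + y ^ 2 + z ^ 2)
    (hQ : (t * h00 + x * h01 + y * h02 + z * h03) ^ 2
      + (t * h01 + x * h11 + y * h12 + z * h13) ^ 2
      + (t * h02 + x * h12 + y * h22 + z * h23) ^ 2
      + (t * h03 + x * h13 + y * h23 + z * h33) ^ 2
      + (x * h12 - y * h11) ^ 2 + (x * h22 - y * h12) ^ 2
      + (x * h13 - z * h11) ^ 2 + (x * h33 - z * h13) ^ 2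
      + (y * h23 - z * h22) ^ 2 + (y * h33 - z * h23) ^ 2 ≤ Q) :
    (t - r) ^ 2 * (h11 + h22 + h33) ^ 2
      ≤ 3 * Q + 2 * ((t + r) ^ 2 * (h00 - (h11 + h22 + h33)) ^ 2) := by
  set S0 := t * h00 + x * h01 + y * h02 + z * h03
  set S1 := t * h01 + x * h11 + y * h12 + z * h13
  set S2 := t * h02 + x * h12 + y * h22 + z * h23
  set S3 := t * h03 + x * h13 + y * h23 + z * h33
  set B := h00 - (h11 + h22 + h33)
  set U := S0 - t * B with hU
  set V1 := -S1 + -(x * h22 - y * h12) + -(x * h33 - z * h13) with hV1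
  set V2 := -S2 + (x * h12 - y * h11) + -(y * h33 - z * h23) with hV2
  set V3 := -S3 + (x * h13 - z * h11) + (y * h23 - z * h22) with hV3
  have hA : (t + r) * (t - r) * (h11 + h22 + h33) = t * U + x * V1 + y * V2 + z * V3 := by
    have : (t + r) * (t - r) = t ^ 2 - (x ^ 2 + y ^ 2 + z ^ 2) := by rw [← hrr]; ring
    rw [this]
    simp only [hU, hV1, hV2, hV3, S0, S1, S2, S3, B]
    ring
  clear_value U V1 V2 V3 S0 S1 S2 S3 B
  have hUV : U ^ 2 + V1 ^ 2 + V2 ^ 2 + V3 ^ 2 ≤ 3 * Q + 2 * ((t + r) ^ 2 * B ^ 2) := by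
    have a1 : U ^ 2 ≤ 2 * S0 ^ 2 + 2 * (t ^ 2 * B ^ 2) := by
      rw [hU]; nlinarith [sq_nonneg (S0 + t * B)]
    have a2 : t ^ 2 * B ^ 2 ≤ (t + r) ^ 2 * B ^ 2 := by gcongr; linarith
    have b1 := sq3 (-S1) (-(x * h22 - y * h12)) (-(x * h33 - z * h13))
    have b2 := sq3 (-S2) (x * h12 - y * h11) (-(y * h33 - z * h23))
    have b3 := sq3 (-S3) (x * h13 - z * h11) (y * h23 - z * h22)
    rw [← hV1] at b1
    rw [← hV2] at b2
    rw [← hV3] at b3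
    simp only [neg_sq] at b1 b2 b3
    linarith [sq_nonneg S0]
  have hcs := cs4 t x y z U V1 V2 V3
  rw [← hA, ← hrr] at hcs
  have hnn : 0 ≤ U ^ 2 + V1 ^ 2 + V2 ^ 2 + V3 ^ 2 := by positivity
  have h2 : (t ^ 2 + r ^ 2) * (U ^ 2 + V1 ^ 2 + V2 ^ 2 + V3 ^ 2)
      ≤ (t + r) ^ 2 * (U ^ 2 + V1 ^ 2 + V2 ^ 2 + V3 ^ 2) := by
    apply mul_le_mul_of_nonneg_right _ hnn
    nlinarith [mul_nonneg ht hr]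
  refine le_trans ?_ hUV
  rcases (add_nonneg ht hr).eq_or_lt with h0 | h0
  · have t0 : t = 0 := by linarith
    have r0 : r = 0 := by linarith
    have z : (t - r) ^ 2 = 0 := by rw [t0, r0]; norm_num
    rw [z, zero_mul]
    exact hnn
  · have h3 : (t + r) ^ 2 * ((t - r) ^ 2 * (h11 + h22 + h33) ^ 2)
        ≤ (t + r) ^ 2 * (U ^ 2 + V1 ^ 2 + V2 ^ 2 + V3 ^ 2) := by
      refine le_trans (le_of_eq ?_) (hcs.trans h2)
      ring
    exact le_of_mul_le_mul_left h3 (by positivity)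

lemma jb_sq (z : ℝ) : jb z ^ 2 = 1 + z ^ 2 := Real.sq_sqrt (by positivity)

lemma rad_cmp (t : ℝ) (x : Sp) :
    jb (t - rad x) ^ 2 ≤ 3 * Wt t (Fin.cons t x) ∧
      Wt t (Fin.cons t x) ≤ 3 * jb (t - rad x) ^ 2 := by
  rw [jb_sq]
  have hs : (0:ℝ) ≤ ∑ i, (x i) ^ 2 := by positivity
  have h0 : 0 ≤ rad x := Real.sqrt_nonneg _
  have hsq : rad x ^ 2 = ∑ i, (x i) ^ 2 := Real.sq_sqrt hs
  have hW : Wt t (Fin.cons t x) = 1 + (t - √(1 + rad x ^ 2)) ^ 2 := by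
    simp [Wt, hsq]
  rw [hW]
  set r := rad x
  set p := √(1 + r ^ 2)
  have hp : p ^ 2 = 1 + r ^ 2 := Real.sq_sqrt (by positivity)
  have hp0 : 0 ≤ p := Real.sqrt_nonneg _
  have h1 : r ≤ p := by nlinarith
  have h2 : p ≤ r + 1 := by nlinarith
  have h3 : (p - r) ^ 2 ≤ 1 := by nlinarith
  constructor
  · nlinarith [sq_nonneg ((t - p) - (p - r))]
  · nlinarith [sq_nonneg ((t - r) + (p - r))]

/-- The total quadratic density of the first-order fields. -/
def Qd (h : Pt → ℝ) (X : Pt) : ℝ :=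
  (∑ a, (pd a h X) ^ 2) + ∑ k : Fin 8, ∑ a, (Gam k (pd a h) X) ^ 2

/-- The divergence term. -/
def Dv (t : ℝ) (h : Pt → ℝ) (X : Pt) : ℝ :=
  ∑ i : Fin 3, ∑ j : Fin 3,
    (pd i.succ (fun Y => Wt t Y * (pd j.succ h Y * pd i.succ (pd j.succ h) Y)) X
      - pd j.succ (fun Y => Wt t Y * (pd j.succ h Y * pd i.succ (pd i.succ h) Y)) X)

lemma lap_bound {h : Pt → ℝ} (hh : ContDiff ℝ (⊤ : ℕ∞) h) (t : ℝ) (ht : 0 ≤ t) (x : Sp) :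
    jb (t - rad x) ^ 2 * (∑ i : Fin 3, pd i.succ (pd i.succ h) (Fin.cons t x)) ^ 2
      ≤ 6 * Qd h (Fin.cons t x)
        + 2 * (jb (t + rad x) ^ 2 * (box1 h (Fin.cons t x)) ^ 2) := by
  set X : Pt := Fin.cons t x with hX
  have e0 : X 0 = t := rfl
  have e1 : X 1 = x 0 := rfl
  have e2 : X 2 = x 1 := rfl
  have e3 : X 3 = x 2 := rfl
  have hrr : rad x ^ 2 = x 0 ^ 2 + x 1 ^ 2 + x 2 ^ 2 := by
    have : rad x ^ 2 = ∑ i, (x i) ^ 2 := Real.sq_sqrt (by positivity)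
    rw [this, Fin.sum_univ_three]
  have s0 : (Fin.succ (0 : Fin 3)) = (1 : Fin 4) := rfl
  have s1 : (Fin.succ (1 : Fin 3)) = (2 : Fin 4) := rfl
  have s2 : (Fin.succ (2 : Fin 3)) = (3 : Fin 4) := rfl
  have g4 : Gam 4 = rot 1 2 := rfl
  have g0 : Gam 0 = pd 0 := rfl
  have g1 : Gam 1 = pd 1 := rfl
  have g2 : Gam 2 = pd 2 := rfl
  have g3 : Gam 3 = pd 3 := rfl
  have g5 : Gam 5 = rot 1 3 := rfl
  have g6 : Gam 6 = rot 2 3 := rfl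
  have g7 : Gam 7 = scal := rfl
  have c : ∀ a b, pd a (pd b h) X = pd b (pd a h) X := fun a b => by rw [pd_comm hh]
  have K := alg_KS t (rad x) (x 0) (x 1) (x 2) (pd 0 (pd 0 h) X) (pd 0 (pd 1 h) X)
    (pd 0 (pd 2 h) X) (pd 0 (pd 3 h) X) (pd 1 (pd 1 h) X) (pd 1 (pd 2 h) X) (pd 1 (pd 3 h) X)
    (pd 2 (pd 2 h) X) (pd 2 (pd 3 h) X) (pd 3 (pd 3 h) X)
    (∑ k ∈ ({4, 5, 6, 7} : Finset (Fin 8)), ∑ a, (Gam k (pd a h) X) ^ 2) ht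
    (Real.sqrt_nonneg _) hrr (by
      rw [Finset.sum_insert (by decide), Finset.sum_insert (by decide),
        Finset.sum_insert (by decide), Finset.sum_singleton, g4, g5, g6, g7]
      simp only [Fin.sum_univ_four, rot, scal, e0, e1, e2, e3]
      rw [c 1 0, c 2 0, c 3 0, c 2 1, c 3 1, c 3 2]
      have p1 := sq_nonneg (x 0 * pd 0 (pd 2 h) X - x 1 * pd 0 (pd 1 h) X)
      have p2 := sq_nonneg (x 0 * pd 0 (pd 3 h) X - x 2 * pd 0 (pd 1 h) X)
      have p3 := sq_nonneg (x 1 * pd 0 (pd 3 h) X - x 2 * pd 0 (pd 2 h) X)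
      have p4 := sq_nonneg (x 0 * pd 2 (pd 3 h) X - x 1 * pd 1 (pd 3 h) X)
      have p5 := sq_nonneg (x 0 * pd 2 (pd 3 h) X - x 2 * pd 1 (pd 2 h) X)
      have p6 := sq_nonneg (x 1 * pd 1 (pd 3 h) X - x 2 * pd 1 (pd 2 h) X)
      linarith)
  have hL := sq3 (pd 1 (pd 1 h) X) (pd 2 (pd 2 h) X) (pd 3 (pd 3 h) X)
  have hG : (pd 1 (pd 1 h) X) ^ 2 + (pd 2 (pd 2 h) X) ^ 2 + (pd 3 (pd 3 h) X) ^ 2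
      ≤ ∑ k ∈ ({0, 1, 2, 3} : Finset (Fin 8)), ∑ a, (Gam k (pd a h) X) ^ 2 := by
    rw [Finset.sum_insert (by decide), Finset.sum_insert (by decide),
        Finset.sum_insert (by decide), Finset.sum_singleton, g0, g1, g2, g3]
    have n0 : 0 ≤ ∑ a, (pd 0 (pd a h) X) ^ 2 := by positivity
    have n : ∀ b : Fin 4, (pd b (pd b h) X) ^ 2 ≤ ∑ a, (pd b (pd a h) X) ^ 2 := fun b =>
      Finset.single_le_sum (f := fun a => (pd b (pd a h) X) ^ 2)
        (fun _ _ => sq_nonneg _) (Finset.mem_univ b)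
    linarith [n 1, n 2, n 3]
  have hQ : (∑ k ∈ ({0, 1, 2, 3} : Finset (Fin 8)), ∑ a, (Gam k (pd a h) X) ^ 2)
      + (∑ k ∈ ({4, 5, 6, 7} : Finset (Fin 8)), ∑ a, (Gam k (pd a h) X) ^ 2) ≤ Qd h X := by
    unfold Qd
    rw [← Finset.sum_union (by decide)]
    have : (({0, 1, 2, 3} : Finset (Fin 8)) ∪ {4, 5, 6, 7}) = Finset.univ := by decide
    rw [this]
    have : 0 ≤ ∑ a, (pd a h X) ^ 2 := by positivity
    linarith
  have nn : 0 ≤ ∑ k ∈ ({0, 1, 2, 3} : Finset (Fin 8)), ∑ a, (Gam k (pd a h) X) ^ 2 := by positivity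
  have nn' : 0 ≤ ∑ k ∈ ({4, 5, 6, 7} : Finset (Fin 8)), ∑ a, (Gam k (pd a h) X) ^ 2 := by
    positivity
  rw [jb_sq, jb_sq]
  unfold box1
  simp only [Fin.sum_univ_three, s0, s1, s2]
  nlinarith [sq_nonneg (pd 0 (pd 0 h) X - (pd 1 (pd 1 h) X + pd 2 (pd 2 h) X + pd 3 (pd 3 h) X))]

lemma pointwise_bound {h : Pt → ℝ} (hh : ContDiff ℝ (⊤ : ℕ∞) h) (t : ℝ) (ht : 0 ≤ t) (x : Sp) :
    jb (t - rad x) ^ 2 *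
        ∑ i : Fin 3, ∑ j : Fin 3, (pd i.succ (pd j.succ h) (Fin.cons t x)) ^ 2
      ≤ 400 * Qd h (Fin.cons t x)
        + 400 * (jb (t + rad x) ^ 2 * (box1 h (Fin.cons t x)) ^ 2)
        + 6 * Dv t h (Fin.cons t x) := by
  have hL := lap_bound hh t ht x
  obtain ⟨c1, c2⟩ := rad_cmp t x
  set X : Pt := Fin.cons t x with hX
  have hW0 : 0 ≤ Wt t X := by unfold Wt; positivity
  have A := alg_ibp (Wt t X) hW0 (fun i => pd i.succ (Wt t) X) (fun j => pd j.succ h X)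
    (fun i j => pd i.succ (pd j.succ h) X) (fun i => pd_Wt t i X)
  have hD : Dv t h X = ∑ i : Fin 3, ∑ j : Fin 3,
      ((pd i.succ (Wt t) X * pd j.succ h X * pd i.succ (pd j.succ h) X
          + Wt t X * (pd i.succ (pd j.succ h) X) ^ 2)
        - (pd j.succ (Wt t) X * pd j.succ h X * pd i.succ (pd i.succ h) X
          + Wt t X * (pd j.succ (pd j.succ h) X * pd i.succ (pd i.succ h) X))) := by
    unfold Dv
    refine Finset.sum_congr rfl fun i _ => Finset.sum_congr rfl fun j _ => ?_
    have d1 := pd_contDiff hh j.succ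
    have d2 := pd_contDiff d1 i.succ
    have d3 := pd_contDiff (pd_contDiff hh i.succ) i.succ
    rw [pd_mul (Wt_contDiff t) (d1.mul d2), pd_mul (Wt_contDiff t) (d1.mul d3),
      pd_mul d1 d2, pd_mul d1 d3]
    have e : pd i.succ (pd i.succ (pd j.succ h)) X = pd j.succ (pd i.succ (pd i.succ h)) X := by
      rw [pd_comm hh i.succ j.succ, pd_comm (pd_contDiff hh i.succ) i.succ j.succ]
    rw [e]
    ring
  rw [← hD] at A
  set S := ∑ i : Fin 3, ∑ j : Fin 3, (pd i.succ (pd j.succ h) X) ^ 2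
  have hS : 0 ≤ S := by positivity
  set L := (∑ i : Fin 3, pd i.succ (pd i.succ h) X) ^ 2
  have hL0 : 0 ≤ L := sq_nonneg _
  have q1 : ∑ j : Fin 3, (pd j.succ h X) ^ 2 ≤ Qd h X := by
    unfold Qd
    rw [Fin.sum_univ_succ (fun a => (pd a h X) ^ 2)]
    have : 0 ≤ ∑ k : Fin 8, ∑ a, (Gam k (pd a h) X) ^ 2 := by positivity
    nlinarith [sq_nonneg (pd 0 h X)]
  have m1 := mul_le_mul_of_nonneg_right c1 hS
  have m2 := mul_le_mul_of_nonneg_right c2 hL0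
  have m3 : 0 ≤ jb (t + rad x) ^ 2 * (box1 h X) ^ 2 := by positivity
  have m4 : 0 ≤ Qd h X := by unfold Qd; positivity
  nlinarith

lemma Gam_good {u : Pt → ℝ} (hu : ContDiff ℝ (⊤ : ℕ∞) u) (hs : HasCompactSupport u) (k : Fin 8) :
    Continuous (Gam k u) ∧ HasCompactSupport (Gam k u) := by
  have hp : ∀ a, Continuous (pd a u) ∧ HasCompactSupport (pd a u) := fun a =>
    ⟨(pd_contDiff hu a).continuous, pd_supp hs a⟩
  have hm : ∀ a b, Continuous (fun X : Pt => X a * pd b u X) ∧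
      HasCompactSupport (fun X : Pt => X a * pd b u X) := fun a b =>
    ⟨(continuous_apply a).mul (hp b).1, (hp b).2.mul_left⟩
  have hr : ∀ a b, Continuous (rot a b u) ∧ HasCompactSupport (rot a b u) := fun a b =>
    ⟨(hm a b).1.sub (hm b a).1, (hm a b).2.sub (hm b a).2⟩
  have hsc : Continuous (scal u) ∧ HasCompactSupport (scal u) := by
    refine ⟨continuous_finsetSum _ fun a _ => (hm a a).1, ?_⟩
    have : scal u = fun X : Pt => X 0 * pd 0 u X + X 1 * pd 1 u X + X 2 * pd 2 u X
        + X 3 * pd 3 u X := by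
      funext X; simp [scal, Fin.sum_univ_four]
    rw [this]
    exact (((hm 0 0).2.add (hm 1 1).2).add (hm 2 2).2).add (hm 3 3).2
  fin_cases k
  exacts [hp 0, hp 1, hp 2, hp 3, hr 1 2, hr 1 3, hr 2 3, hsc]

lemma sq_slice_integrable {P : Pt → ℝ} (hP : Continuous P ∧ HasCompactSupport P) (t : ℝ) :
    Integrable (fun x : Sp => (P (Fin.cons t x)) ^ 2) := by
  have := slice_integrable (hP.1.mul hP.1) (hP.2.mul_right (f' := P)) t
  refine this.congr (Filter.Eventually.of_forall fun x => ?_)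
  simp [sq]

lemma int_Dv {h : Pt → ℝ} (hh : ContDiff ℝ (⊤ : ℕ∞) h) (hs : HasCompactSupport h) (t : ℝ) :
    Integrable (fun x : Sp => Dv t h (Fin.cons t x)) ∧
      ∫ x : Sp, Dv t h (Fin.cons t x) = 0 := by
  have c1 : ∀ i j k : Fin 3, ContDiff ℝ (⊤ : ℕ∞)
      (fun Y => Wt t Y * (pd j.succ h Y * pd i.succ (pd k.succ h) Y)) := fun i j k =>
    (Wt_contDiff t).mul ((pd_contDiff hh j.succ).mul (pd_contDiff (pd_contDiff hh k.succ) i.succ))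
  have c2 : ∀ i j k : Fin 3, HasCompactSupport
      (fun Y => Wt t Y * (pd j.succ h Y * pd i.succ (pd k.succ h) Y)) := fun i j k =>
    ((pd_supp hs j.succ).mul_right (f' := pd i.succ (pd k.succ h))).mul_left (f := Wt t)
  have c3 : ∀ i j k l : Fin 3, Integrable (fun x : Sp => pd l.succ
      (fun Y => Wt t Y * (pd j.succ h Y * pd i.succ (pd k.succ h) Y)) (Fin.cons t x)) :=
    fun i j k l => slice_integrable (pd_contDiff (c1 i j k) l.succ).continuous
      (pd_supp (c2 i j k) l.succ) t
  have c4 : ∀ i j : Fin 3, Integrable (fun x : Sp =>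
      pd i.succ (fun Y => Wt t Y * (pd j.succ h Y * pd i.succ (pd j.succ h) Y)) (Fin.cons t x)
      - pd j.succ (fun Y => Wt t Y * (pd j.succ h Y * pd i.succ (pd i.succ h) Y))
        (Fin.cons t x)) := fun i j => (c3 i j j i).sub (c3 i j i j)
  unfold Dv
  constructor
  · exact integrable_finsetSum _ fun i _ => integrable_finsetSum _ fun j _ => c4 i j
  · rw [integral_finsetSum _ fun i _ => integrable_finsetSum _ fun j _ => c4 i j]
    refine Finset.sum_eq_zero fun i _ => ?_
    rw [integral_finsetSum _ fun j _ => c4 i j]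
    refine Finset.sum_eq_zero fun j _ => ?_
    rw [integral_sub (c3 i j j i) (c3 i j i j), int_pd_zero (c1 i j j) (c2 i j j),
      int_pd_zero (c1 i j i) (c2 i j i), sub_zero]

lemma rad_cont : Continuous rad := by unfold rad; fun_prop
lemma jb_cont : Continuous jb := by unfold jb; fun_prop

lemma int_bound {h : Pt → ℝ} (hh : ContDiff ℝ (⊤ : ℕ∞) h) (hs : HasCompactSupport h) (t : ℝ)
    (ht : 0 ≤ t) :
    ∫ x : Sp, jb (t - rad x) ^ 2 *
        ∑ i : Fin 3, ∑ j : Fin 3, (pd i.succ (pd j.succ h) (Fin.cons t x)) ^ 2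
      ≤ 400 * ((∫ x : Sp, ∑ a, (pd a h (Fin.cons t x)) ^ 2)
          + ∑ k : Fin 8, ∫ x : Sp, ∑ a, (Gam k (pd a h) (Fin.cons t x)) ^ 2)
        + 400 * ∫ x : Sp, jb (t + rad x) ^ 2 * (box1 h (Fin.cons t x)) ^ 2 := by
  have hp : ∀ a, Continuous (pd a h) ∧ HasCompactSupport (pd a h) := fun a =>
    ⟨(pd_contDiff hh a).continuous, pd_supp hs a⟩
  have hpp : ∀ a b, Continuous (pd a (pd b h)) ∧ HasCompactSupport (pd a (pd b h)) := fun a b =>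
    ⟨(pd_contDiff (pd_contDiff hh b) a).continuous, pd_supp (pd_supp hs b) a⟩
  have i1 : Integrable (fun x : Sp => ∑ a, (pd a h (Fin.cons t x)) ^ 2) :=
    integrable_finsetSum _ fun a _ => sq_slice_integrable (hp a) t
  have i2 : ∀ k : Fin 8, Integrable (fun x : Sp => ∑ a, (Gam k (pd a h) (Fin.cons t x)) ^ 2) :=
    fun k => integrable_finsetSum _ fun a _ =>
      sq_slice_integrable (Gam_good (pd_contDiff hh a) (pd_supp hs a) k) t
  have iQ : Integrable (fun x : Sp => Qd h (Fin.cons t x)) :=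
    i1.add (integrable_finsetSum _ fun k _ => i2 k)
  have hbox : Continuous (box1 h) ∧ HasCompactSupport (box1 h) := by
    have : box1 h = fun X => pd 0 (pd 0 h) X - (pd 1 (pd 1 h) X + pd 2 (pd 2 h) X
        + pd 3 (pd 3 h) X) := by
      funext X; simp only [box1, Fin.sum_univ_three]; rfl
    rw [this]
    exact ⟨(hpp 0 0).1.sub (((hpp 1 1).1.add (hpp 2 2).1).add (hpp 3 3).1),
      (hpp 0 0).2.sub (((hpp 1 1).2.add (hpp 2 2).2).add (hpp 3 3).2)⟩
  have iB : Integrable (fun x : Sp => jb (t + rad x) ^ 2 * (box1 h (Fin.cons t x)) ^ 2) := by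
    refine Continuous.integrable_of_hasCompactSupport ?_ ?_
    · exact ((jb_cont.comp (continuous_const.add rad_cont)).pow 2).mul
        ((hbox.1.comp (cons_emb t).continuous).pow 2)
    · have h1 : HasCompactSupport (fun x : Sp => box1 h (Fin.cons t x)) :=
        hbox.2.comp_isClosedEmbedding (cons_emb t)
      refine h1.mono fun x hx => ?_
      contrapose! hx
      simp only [Function.mem_support, not_not] at hx ⊢
      simp [hx]
  obtain ⟨iD, zD⟩ := int_Dv hh hs t
  have key := integral_mono_of_nonneg (μ := (volume : Measure Sp))
    (Filter.Eventually.of_forall fun x : Sp => by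
      show (0:ℝ) ≤ jb (t - rad x) ^ 2 *
        ∑ i : Fin 3, ∑ j : Fin 3, (pd i.succ (pd j.succ h) (Fin.cons t x)) ^ 2
      positivity)
    (((iQ.const_mul 400).add (iB.const_mul 400)).add (iD.const_mul 6))
    (Filter.Eventually.of_forall fun x : Sp => pointwise_bound hh t ht x)
  refine key.trans (le_of_eq ?_)
  rw [integral_add' ((iQ.const_mul 400).add (iB.const_mul 400)) (iD.const_mul 6),
    integral_add' (iQ.const_mul 400) (iB.const_mul 400), integral_const_mul, integral_const_mul,
    integral_const_mul, zD]
  unfold Qd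
  rw [integral_add i1 (integrable_finsetSum _ fun k _ => i2 k),
    integral_finsetSum _ fun k _ => i2 k]
  ring

/-- inequality (3.5) of the paper.  For `h ∈ C₀^∞(ℝ₊×ℝ³)` and `t ≥ 0`,
`‖⟨t-r⟩∇_x² h(t,·)‖₂ ≤ C Σ_{|α|≤1}‖Γ^α h'(t,·)‖₂ + C‖⟨t+r⟩□h(t,·)‖₂`. -/
theorem stmt_12 :
    ∃ C : ℝ, 0 < C ∧
      ∀ (h : Pt → ℝ), ContDiff ℝ (⊤ : ℕ∞) h → HasCompactSupport h →
        (∀ X : Pt, X 0 < 0 → h X = 0) →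
        ∀ t : ℝ, 0 ≤ t →
          (∫ x : Sp, jb (t - rad x) ^ 2 *
              ∑ i : Fin 3, ∑ j : Fin 3,
                (pd i.succ (pd j.succ h) (Fin.cons t x)) ^ 2) ^ ((1:ℝ)/2)
            ≤ C * ∑ m ∈ Finset.range 2, ∑ α : Fin m → Fin 8,
                (∫ x : Sp, ∑ a, (GamComp α (pd a h) (Fin.cons t x)) ^ 2) ^ ((1:ℝ)/2)
              + C * (∫ x : Sp,
                  jb (t + rad x) ^ 2 * (box1 h (Fin.cons t x)) ^ 2) ^ ((1:ℝ)/2) := by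
  refine ⟨20, by norm_num, ?_⟩
  intro h hh hs _ t ht
  have hb := int_bound hh hs t ht
  have e1 : ∀ F : ∀ m : ℕ, (Fin m → Fin 8) → ℝ,
      ∑ m ∈ Finset.range 2, ∑ α : Fin m → Fin 8, F m α
        = F 0 (fun i => i.elim0) + ∑ k : Fin 8, F 1 (fun _ => k) := by
    intro F
    rw [Finset.sum_range_succ, Finset.sum_range_succ, Finset.sum_range_zero, zero_add]
    congr 1
    · rw [Fintype.sum_unique]
      congr 1
    · exact ((Equiv.funUnique (Fin 1) (Fin 8)).symm.sum_comp (F 1)).symm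
  rw [e1]
  have g0 : ∀ a, GamComp (fun i : Fin 0 => i.elim0) (pd a h) = pd a h := fun a => rfl
  have g1 : ∀ (k : Fin 8) a, GamComp (fun _ : Fin 1 => k) (pd a h) = Gam k (pd a h) :=
    fun k a => rfl
  simp only [g0, g1, ← Real.sqrt_eq_rpow]
  set L := ∫ x : Sp, jb (t - rad x) ^ 2 *
        ∑ i : Fin 3, ∑ j : Fin 3, (pd i.succ (pd j.succ h) (Fin.cons t x)) ^ 2
  set G0 := ∫ x : Sp, ∑ a, (pd a h (Fin.cons t x)) ^ 2
  set G : Fin 8 → ℝ := fun k => ∫ x : Sp, ∑ a, (Gam k (pd a h) (Fin.cons t x)) ^ 2 with hG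
  set B := ∫ x : Sp, jb (t + rad x) ^ 2 * (box1 h (Fin.cons t x)) ^ 2
  have n0 : 0 ≤ G0 := integral_nonneg fun x => by positivity
  have nG : ∀ k, 0 ≤ G k := fun k => integral_nonneg fun x => by positivity
  have nB : 0 ≤ B := integral_nonneg fun x => by positivity
  have sG : ∑ k, G k ≤ (∑ k, √(G k)) ^ 2 := by
    have := Finset.sum_sq_le_sq_sum_of_nonneg (s := Finset.univ) (f := fun k => √(G k))
      (fun k _ => Real.sqrt_nonneg _)
    simpa [Real.sq_sqrt (nG _)] using this
  have pG : 0 ≤ ∑ k, √(G k) := by positivity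
  have p0 := Real.sqrt_nonneg G0
  have pB := Real.sqrt_nonneg B
  have q0 := Real.sq_sqrt n0
  have qB := Real.sq_sqrt nB
  apply Real.sqrt_le_iff.2
  refine ⟨by positivity, ?_⟩
  change L ≤ 400 * (G0 + ∑ k, G k) + 400 * B at hb
  change L ≤ (20 * (√G0 + ∑ k, √(G k)) + 20 * √B) ^ 2
  nlinarith [mul_nonneg p0 pG, mul_nonneg p0 pB, mul_nonneg pG pB]
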